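/- Let x be an infinite word over a finite alphabet A that is linearly recurrent with constant K and aperiodic. Then for every nonempty finite word u over A, the word u^{K+1} (u repeated K+1 times) is not a factor of x. -/

import Mathlib

/-- The factor of the infinite word `x` of length `n` starting at position `i`,
i.e. the word `x_i x_{i+1} ⋯ x_{i+n-1}`. -/
def seg {A : Type*} (x : ℕ → A) (i n : ℕ) : List A :=
  (List.range n).map fun k => x (i + k)

/-- `u` is a (nonempty, finite) factor of the infinite word `x`. -/
def IsFactor {A : Type*} (x : ℕ → A) (u : List A) : Prop :=
  u ≠ [] ∧ ∃ i, u = seg x i u.length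

/-- `u` is a (finite) prefix of the infinite word `x`. -/
def IsPrefixOf {A : Type*} (x : ℕ → A) (u : List A) : Prop :=
  u = seg x 0 u.length

/-- The finite word `u` occurs in the finite word `v` at position `i`. -/
def OccursAt {A : Type*} (u v : List A) (i : ℕ) : Prop :=
  i + u.length ≤ v.length ∧ (v.drop i).take u.length = u

/-- `w` is a return word to `u` in `x`: `w` is nonempty, `w ++ u` is a factor of
`x`, and `u` occurs exactly twice in `w ++ u`. -/
def IsReturn {A : Type*} (x : ℕ → A) (u w : List A) : Prop :=
  w ≠ [] ∧ IsFactor x (w ++ u) ∧ {i | OccursAt u (w ++ u) i}.ncard = 2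

/-- The set of return words to `u` in `x`. -/
def Ret {A : Type*} (x : ℕ → A) (u : List A) : Set (List A) :=
  {w | IsReturn x u w}

/-- `x` is uniformly recurrent: every factor has a nonempty and finite set of
return words. -/
def UniformlyRecurrent {A : Type*} (x : ℕ → A) : Prop :=
  ∀ u, IsFactor x u → (Ret x u).Nonempty ∧ (Ret x u).Finite

/-- `x` is aperiodic: there is no `n ≥ 1` with `x (i + n) = x i` for all `i`. -/
def Aperiodic {A : Type*} (x : ℕ → A) : Prop :=
  ¬ ∃ n : ℕ, 1 ≤ n ∧ ∀ i : ℕ, x (i + n) = x i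

/-- `x` is linearly recurrent with constant `K`: it is uniformly recurrent and every
return word `w` to a factor `u` satisfies `|w| ≤ K·|u|`. -/
def LinearlyRecurrent {A : Type*} (x : ℕ → A) (K : ℕ) : Prop :=
  UniformlyRecurrent x ∧ ∀ u, IsFactor x u → ∀ w ∈ Ret x u, w.length ≤ K * u.length

theorem seg_length {A : Type*} (x : ℕ → A) (i n : ℕ) : (seg x i n).length = n := by
  simp [seg]

theorem seg_getElem? {A : Type*} (x : ℕ → A) (i n k : ℕ) (h : k < n) :
    (seg x i n)[k]? = some (x (i + k)) := by
  simp [seg, h]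

theorem seg_eq_iff {A : Type*} (x : ℕ → A) (a b n : ℕ) :
    seg x a n = seg x b n ↔ ∀ k < n, x (a + k) = x (b + k) := by
  simp [seg]

theorem seg_add {A : Type*} (x : ℕ → A) (a m n : ℕ) :
    seg x a (m + n) = seg x a m ++ seg x (a + m) n := by
  simp [seg, List.range_add, Function.comp_def, Nat.add_assoc]

theorem seg_isFactor {A : Type*} (x : ℕ → A) (a n : ℕ) (h : 0 < n) :
    IsFactor x (seg x a n) := by
  refine ⟨?_, a, ?_⟩
  · intro h'
    have := seg_length x a n
    rw [h'] at this
    simp at this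
    omega
  · rw [seg_length]

theorem occursAt_seg {A : Type*} (x : ℕ → A) (v : List A) (p d t : ℕ) :
    OccursAt v (seg x p (d + v.length)) t ↔ t ≤ d ∧ seg x (p + t) v.length = v := by
  unfold OccursAt
  rw [seg_length]
  constructor
  · rintro ⟨h1, h2⟩
    have h3 : t ≤ d := by omega
    refine ⟨h3, ?_⟩
    obtain ⟨e, rfl⟩ := Nat.exists_eq_add_of_le h3
    rw [show t + e + v.length = t + (v.length + e) by omega, seg_add, seg_add,
      List.drop_left' (seg_length _ _ _), List.take_left' (seg_length _ _ _)] at h2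
    exact h2
  · rintro ⟨h3, h2⟩
    refine ⟨by omega, ?_⟩
    obtain ⟨e, rfl⟩ := Nat.exists_eq_add_of_le h3
    rw [show t + e + v.length = t + (v.length + e) by omega, seg_add, seg_add,
      List.drop_left' (seg_length _ _ _), List.take_left' (seg_length _ _ _)]
    exact h2

theorem gap_le {A : Type*} (x : ℕ → A) (K : ℕ) (hLR : LinearlyRecurrent x K)
    (v : List A) (hv : v ≠ []) (p q : ℕ) (hpq : p < q)
    (hp : seg x p v.length = v) (hq : seg x q v.length = v)
    (hno : ∀ r, p < r → r < q → seg x r v.length ≠ v) : q ≤ p + K * v.length := by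
  obtain ⟨d, rfl⟩ := Nat.exists_eq_add_of_le hpq.le
  have hd : 0 < d := by omega
  have hcat : seg x p d ++ v = seg x p (d + v.length) := by rw [seg_add, hq]
  have hF : IsFactor x v := ⟨hv, p, hp.symm⟩
  have := hLR.2 v hF (seg x p d) ⟨(seg_isFactor x p d hd).1, ?_, ?_⟩
  · rw [seg_length] at this; omega
  · rw [hcat]; exact seg_isFactor _ _ _ (by omega)
  · rw [hcat]
    have : {i | OccursAt v (seg x p (d + v.length)) i} = {0, d} := by
      ext t
      simp only [Set.mem_setOf_eq, occursAt_seg, Set.mem_insert_iff, Set.mem_singleton_iff]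
      constructor
      · rintro ⟨h1, h2⟩
        by_contra h
        exact hno (p + t) (by omega) (by omega) h2
      · rintro (rfl | rfl)
        · exact ⟨by omega, hp⟩
        · exact ⟨le_rfl, hq⟩
    rw [this, Set.ncard_pair (by omega)]

theorem occ_pos {A : Type*} (x : ℕ → A) (h : UniformlyRecurrent x) (a n : ℕ) (hn : 0 < n) :
    ∃ b, 0 < b ∧ seg x b n = seg x a n := by
  obtain ⟨w, hw, ⟨_, c, hc⟩, _⟩ := (h _ (seg_isFactor x a n hn)).1
  rw [List.length_append, seg_length, seg_add] at hc
  refine ⟨c + w.length, ?_, ?_⟩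
  · have := List.length_pos_of_ne_nil hw
    omega
  · exact (List.append_inj_right hc (seg_length _ _ _).symm).symm

theorem prefix_inf {A : Type*} (x : ℕ → A) (h : UniformlyRecurrent x) (n : ℕ) (hn : 0 < n)
    (N : ℕ) : ∃ b, N ≤ b ∧ ∀ k < n, x (b + k) = x k := by
  induction N with
  | zero => exact ⟨0, le_rfl, by simp⟩
  | succ N ih =>
    obtain ⟨a, ha, hk⟩ := ih
    obtain ⟨b, hb, hs⟩ := occ_pos x h 0 (a + n) (by omega)
    rw [seg_eq_iff] at hs
    refine ⟨b + a, by omega, fun k hkn => ?_⟩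
    rw [← hk k hkn, Nat.add_assoc, hs (a + k) (by omega)]
    simp

theorem window {A : Type*} (x : ℕ → A) (K : ℕ) (hLR : LinearlyRecurrent x K)
    (n : ℕ) (hn : 0 < n) (i j : ℕ) :
    ∃ s, i ≤ s ∧ s ≤ i + K * n ∧ seg x s n = seg x j n := by
  classical
  obtain ⟨q, hq, hqk⟩ := prefix_inf x hLR.1 (i + K * n + n) (by omega) j
  obtain ⟨r0, hr0, hr0k⟩ := prefix_inf x hLR.1 (j + n) (by omega) (q + i + 1)
  have hex : ∃ r, q + i < r ∧ seg x r n = seg x j n := by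
    refine ⟨r0 + j, by omega, ?_⟩
    rw [seg_eq_iff]
    intro k hk
    rw [Nat.add_assoc, hr0k _ (by omega)]
  obtain ⟨hr1, hr2⟩ := Nat.find_spec hex
  have hmin := fun m => @Nat.find_min _ _ hex m
  generalize Nat.find hex = r at hr1 hr2 hmin
  have hp2 : seg x (Nat.findGreatest (fun p => seg x p n = seg x j n) (q + i)) n = seg x j n :=
    Nat.findGreatest_spec (P := fun p => seg x p n = seg x j n) (m := j) (by omega) rfl
  have hp1 := Nat.findGreatest_le (P := fun p => seg x p n = seg x j n) (q + i)
  have hpm := fun m => @Nat.findGreatest_is_greatest m (fun p => seg x p n = seg x j n) _ (q + i)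
  generalize Nat.findGreatest (fun p => seg x p n = seg x j n) (q + i) = p at hp2 hp1 hpm
  have hg := gap_le x K hLR (seg x j n) (seg_isFactor x j n hn).1 p r (by omega)
    (by rw [seg_length]; exact hp2) (by rw [seg_length]; exact hr2) (by
      rw [seg_length]
      intro t h1 h2 h3
      by_cases ht : t ≤ q + i
      · exact hpm t h1 ht h3
      · exact hmin t h2 ⟨by omega, h3⟩)
  rw [seg_length] at hg
  refine ⟨r - q, by omega, by omega, ?_⟩
  rw [← hr2, seg_eq_iff]
  intro k hk
  rw [← hqk _ (by omega)]
  congr 1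
  omega

theorem slide {A : Type*} (x : ℕ → A) (s n : ℕ) :
    x s ::ₘ (seg x (s + 1) n : Multiset A) = x (s + n) ::ₘ (seg x s n : Multiset A) := by
  have h1 := seg_add x s 1 n
  have h2 := seg_add x s n 1
  rw [Nat.add_comm 1 n, h2] at h1
  have h3 := congrArg (fun l : List A => (l : Multiset A)) h1
  simp only [← Multiset.coe_add] at h3
  simp only [show ∀ a, seg x a 1 = [x a] from fun a => by simp [seg],
    Multiset.coe_singleton] at h3
  rw [← Multiset.singleton_add, ← Multiset.singleton_add, ← h3, add_comm]

/-- If `x` is an aperiodic infinite word over a finite alphabet that is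
linearly recurrent with constant `K`, then for every nonempty finite word `u`, the word
`u^{K+1}` is not a factor of `x`. -/
theorem stmt10 {A : Type*} [Fintype A] (x : ℕ → A) (K : ℕ)
    (hLR : LinearlyRecurrent x K) (hAp : Aperiodic x) :
    ∀ u : List A, u ≠ [] → ¬ IsFactor x (List.replicate (K + 1) u).flatten := by
  rintro u hu ⟨_, i, hi⟩
  have hn : 0 < u.length := List.length_pos_of_ne_nil hu
  have hlen : (List.replicate K u).flatten.length = K * u.length := by simp
  have e1 : (List.replicate (K + 1) u).flatten = u ++ (List.replicate K u).flatten := by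
    simp [List.replicate_succ]
  have e2 : (List.replicate (K + 1) u).flatten = (List.replicate K u).flatten ++ u := by
    simp [List.replicate_succ']
  have hlen' : (List.replicate (K + 1) u).flatten.length = u.length + K * u.length := by
    rw [e1, List.length_append, hlen]
  rw [hlen'] at hi
  generalize (List.replicate K u).flatten = F at hlen e1 e2
  have hper : ∀ k < K * u.length, x (i + k + u.length) = x (i + k) := by
    intro k hk
    have g1 := seg_getElem? x i (u.length + K * u.length) (u.length + k) (by omega)
    have g2 := seg_getElem? x i (u.length + K * u.length) k (by omega)
    rw [← hi, e1, List.getElem?_append_right (by omega), Nat.add_sub_cancel_left] at g1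
    rw [← hi, e2, List.getElem?_append_left (by omega), g1] at g2
    rw [← Option.some.inj g2]
    congr 1
    omega
  have hM : ∀ k ≤ K * u.length,
      (seg x (i + k) u.length : Multiset A) = (seg x i u.length : Multiset A) := by
    intro k
    induction k with
    | zero => intro _; rfl
    | succ k ih =>
      intro hk
      have h := slide x (i + k) u.length
      rw [hper k (by omega), Multiset.cons_inj_right, ih (by omega)] at h
      exact h
  have hall : ∀ j, (seg x j u.length : Multiset A) = (seg x i u.length : Multiset A) := by
    intro j
    obtain ⟨s, h1, h2, h3⟩ := window x K hLR u.length hn i j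
    obtain ⟨k, rfl⟩ := Nat.exists_eq_add_of_le h1
    rw [← h3, hM k (by omega)]
  refine hAp ⟨u.length, hn, fun j => ?_⟩
  have h := slide x j u.length
  rw [hall, hall j, Multiset.cons_inj_left] at h
  exact h.symm
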